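/- Let Y be a nonnegative random variable with finite nonzero mean μ = E[Y], and suppose there exists a random variable Y^s defined on the same probability space having the Y-size bias distribution and satisfying |Y^s − Y| ≤ c almost surely for some constant c > 0. If the moment generating function m(θ) = E[e^{θY}] is finite at θ = 2/c, then for all t > 0, P(Y − μ ≥ t) ≤ exp(−t²/(2cμ + ct)). -/

import Mathlib

open MeasureTheory

/-- `Ys` has the `Y`-size bias distribution (with respect to the probability measure `P`):
`E[Y f(Y)] = E[Y] ⬝ E[f(Ys)]` for all bounded measurable `f`. -/
def HasSizeBiasedDistribution {Ω : Type*} [MeasurableSpace Ω] (P : Measure Ω)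
    (Y Ys : Ω → ℝ) : Prop :=
  ∀ f : ℝ → ℝ, Measurable f → (∃ C : ℝ, ∀ x, |f x| ≤ C) →
    ∫ ω, Y ω * f (Y ω) ∂P = (∫ ω, Y ω ∂P) * ∫ ω, f (Ys ω) ∂P

/-!
Truncate `Y` to `Z = min Y K` with `K = E[Y] + t`, which keeps the tail event and makes the moment
generating function `m` of `Z` finite everywhere. Since `Ys ≤ Y + c`, the size bias identity for
`y ↦ exp (θ * min y K)` gives `m' θ ≤ E[Y] * exp (c * θ) * m θ` for `θ ≥ 0`, hence
`m θ ≤ exp (E[Y] * (exp (c * θ) - 1) / c)` by Grönwall's inequality. Chernoff's bound at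
`θ = 2 * t / (c * (2 * E[Y] + t))` concludes, because `2 * x / (x + 2) ≤ log (1 + x)` makes
`E[Y] * exp (c * θ)` at most `E[Y] + t`.
-/

section

open Real ProbabilityTheory Set

theorem gronwall_le_mul_exp_sub {f f' A a : ℝ → ℝ} {x y : ℝ} (hxy : x ≤ y)
    (hfc : ContinuousOn f (Icc x y)) (hAc : ContinuousOn A (Icc x y))
    (hf : ∀ s ∈ Ioo x y, HasDerivAt f (f' s) s) (hA : ∀ s ∈ Ioo x y, HasDerivAt A (a s) s)
    (hle : ∀ s ∈ Ioo x y, f' s ≤ a s * f s) :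
    f y ≤ f x * exp (A y - A x) := by
  have hderiv : ∀ s ∈ Ioo x y, HasDerivAt (fun u => f u * exp (-A u))
      (f' s * exp (-A s) + f s * (exp (-A s) * -a s)) s := fun s hs =>
    (hf s hs).mul (hA s hs).neg.exp
  have hanti : AntitoneOn (fun u => f u * exp (-A u)) (Icc x y) := by
    refine antitoneOn_of_hasDerivWithinAt_nonpos (convex_Icc x y) (hfc.mul hAc.neg.rexp)
      (fun s hs => (hderiv s (interior_Icc.subset hs)).hasDerivWithinAt) fun s hs => ?_
    have h := mul_le_mul_of_nonneg_right (hle s (interior_Icc.subset hs)) (exp_pos (-A s)).le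
    linarith
  calc f y = f y * exp (-A y) * exp (A y) := by rw [mul_assoc, ← exp_add]; simp
    _ ≤ f x * exp (-A x) * exp (A y) := by
      gcongr ?_ * _
      exact hanti (left_mem_Icc.2 hxy) (right_mem_Icc.2 hxy) hxy
    _ = f x * exp (A y - A x) := by rw [mul_assoc, ← exp_add, neg_add_eq_sub]

theorem mul_exp_two_mul_div_le_add {a t : ℝ} (ha : 0 ≤ a) (ht : 0 ≤ t) :
    a * exp (2 * t / (2 * a + t)) ≤ a + t := by
  obtain rfl | ha := ha.eq_or_lt
  · simpa using ht
  have hlog : 2 * t / (2 * a + t) ≤ log (1 + t / a) := by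
    convert le_log_one_add_of_nonneg (div_nonneg ht ha.le) using 1
    field_simp
    ring
  calc a * exp (2 * t / (2 * a + t)) ≤ a * (1 + t / a) := by
        gcongr
        exact (le_log_iff_exp_le (by positivity)).1 hlog
    _ = a + t := by field_simp

namespace HasSizeBiasedDistribution

variable {Ω : Type*} [MeasurableSpace Ω] {P : Measure Ω} {Y Ys : Ω → ℝ} {c : ℝ}

theorem integral_mul_exp_min_le [IsFiniteMeasure P] (hsb : HasSizeBiasedDistribution P Y Ys)
    (hY : AEMeasurable Y P) (hmean : 0 ≤ ∫ ω, Y ω ∂P) (hc : 0 ≤ c)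
    (hYs : ∀ᵐ ω ∂P, Ys ω ≤ Y ω + c) {θ : ℝ} (hθ : 0 ≤ θ) (K : ℝ) :
    ∫ ω, Y ω * exp (θ * min (Y ω) K) ∂P
      ≤ (∫ ω, Y ω ∂P) * exp (c * θ) * mgf (fun ω => min (Y ω) K) P θ := by
  have hbias := hsb (fun y => exp (θ * min y K)) (by fun_prop) ⟨exp (θ * K), fun y => by
    rw [abs_exp]
    gcongr
    exact min_le_right y K⟩
  rw [hbias, mul_assoc]
  refine mul_le_mul_of_nonneg_left ?_ hmean
  rw [mgf, ← integral_const_mul]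
  refine integral_mono_of_nonneg (.of_forall fun ω => (exp_pos _).le)
    ((integrable_exp_mul_of_le θ K hθ (hY.min aemeasurable_const)
      (.of_forall fun ω => min_le_right _ _)).const_mul _) ?_
  filter_upwards [hYs] with ω hω
  have hmin : min (Ys ω) K ≤ c + min (Y ω) K := by grind
  calc exp (θ * min (Ys ω) K) ≤ exp (θ * (c + min (Y ω) K)) := by gcongr
    _ = exp (c * θ) * exp (θ * min (Y ω) K) := by rw [← exp_add]; ring_nf

theorem integral_min_mul_exp_min_le [IsFiniteMeasure P] (hsb : HasSizeBiasedDistribution P Y Ys)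
    (hY : Integrable Y P) (hmean : 0 ≤ ∫ ω, Y ω ∂P) (hc : 0 ≤ c)
    (hYs : ∀ᵐ ω ∂P, Ys ω ≤ Y ω + c) {θ : ℝ} (hθ : 0 ≤ θ) (K : ℝ) :
    ∫ ω, min (Y ω) K * exp (θ * min (Y ω) K) ∂P
      ≤ (∫ ω, Y ω ∂P) * exp (c * θ) * mgf (fun ω => min (Y ω) K) P θ := by
  have hmul {X : Ω → ℝ} (hX : Integrable X P) :
      Integrable (fun ω => X ω * exp (θ * min (Y ω) K)) P := by
    refine hX.mul_bdd (c := exp (θ * K)) ?_ (.of_forall fun ω => ?_)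
    · exact (integrable_exp_mul_of_le θ K hθ (hY.aemeasurable.min aemeasurable_const)
        (.of_forall fun ω => min_le_right _ _)).aestronglyMeasurable
    · rw [norm_eq_abs, abs_exp]
      gcongr
      exact min_le_right _ _
  calc ∫ ω, min (Y ω) K * exp (θ * min (Y ω) K) ∂P
      ≤ ∫ ω, Y ω * exp (θ * min (Y ω) K) ∂P :=
        integral_mono (hmul (hY.inf (integrable_const K))) (hmul hY) fun ω =>
          mul_le_mul_of_nonneg_right (min_le_left _ _) (exp_pos _).le
    _ ≤ (∫ ω, Y ω ∂P) * exp (c * θ) * mgf (fun ω => min (Y ω) K) P θ :=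
        hsb.integral_mul_exp_min_le hY.aemeasurable hmean hc hYs hθ K

theorem mgf_min_le [IsProbabilityMeasure P] (hsb : HasSizeBiasedDistribution P Y Ys)
    (hY : Integrable Y P) (hYnonneg : ∀ᵐ ω ∂P, 0 ≤ Y ω) (hc : 0 < c)
    (hYs : ∀ᵐ ω ∂P, Ys ω ≤ Y ω + c) {θ : ℝ} (hθ : 0 ≤ θ) (K : ℝ) :
    mgf (fun ω => min (Y ω) K) P θ ≤ exp ((∫ ω, Y ω ∂P) * (exp (c * θ) - 1) / c) := by
  set μ := ∫ ω, Y ω ∂P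
  set Z : Ω → ℝ := fun ω => min (Y ω) K
  have hexp (s : ℝ) : Integrable (fun ω => exp (s * Z ω)) P := by
    refine integrable_exp_mul_of_mem_Icc (a := min 0 K) (b := K)
      (hY.aemeasurable.min aemeasurable_const) ?_
    filter_upwards [hYnonneg] with ω hω
    exact ⟨min_le_min_right K hω, min_le_right _ _⟩
  have hmem (s : ℝ) : s ∈ interior (integrableExpSet Z P) := by
    rw [show integrableExpSet Z P = univ from eq_univ_of_forall hexp, interior_univ]
    exact mem_univ s
  have hcoeff (s : ℝ) : HasDerivAt (fun u => μ * exp (c * u) / c) (μ * exp (c * s)) s := by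
    convert! ((hasDerivAt_const_mul c).exp.const_mul μ).div_const c using 1
    field_simp
  have hgronwall := gronwall_le_mul_exp_sub hθ (continuous_mgf hexp).continuousOn
    (fun s _ => (hcoeff s).continuousAt.continuousWithinAt)
    (fun s _ => hasDerivAt_mgf (hmem s)) (fun s _ => hcoeff s)
    fun s hs => hsb.integral_min_mul_exp_min_le hY (integral_nonneg_of_ae hYnonneg) hc.le hYs
      hs.1.le K
  convert hgronwall using 1
  rw [mgf_zero, one_mul, mul_zero, exp_zero]
  ring_nf

theorem measureReal_ge_le_exp [IsProbabilityMeasure P]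
    (hsb : HasSizeBiasedDistribution P Y Ys) (hY : Integrable Y P)
    (hYnonneg : ∀ᵐ ω ∂P, 0 ≤ Y ω) (hc : 0 < c) (hYs : ∀ᵐ ω ∂P, Ys ω ≤ Y ω + c)
    {θ : ℝ} (hθ : 0 ≤ θ) (K : ℝ) :
    P.real {ω | K ≤ Y ω} ≤ exp (-θ * K + (∫ ω, Y ω ∂P) * (exp (c * θ) - 1) / c) := by
  have hchernoff := measure_ge_le_exp_mul_mgf (μ := P) (X := fun ω => min (Y ω) K) K hθ
    (integrable_exp_mul_of_le θ K hθ (hY.aemeasurable.min aemeasurable_const)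
      (.of_forall fun ω => min_le_right _ _))
  simp only [le_min_iff, le_refl, and_true] at hchernoff
  rw [exp_add]
  exact hchernoff.trans (by gcongr; exact hsb.mgf_min_le hY hYnonneg hc hYs hθ K)

end HasSizeBiasedDistribution

theorem right_tail_of_bounded_size_bias_coupling_general
    {Ω : Type*} [MeasurableSpace Ω] {P : Measure Ω} [IsProbabilityMeasure P]
    {Y Ys : Ω → ℝ} (hYnonneg : ∀ᵐ ω ∂P, 0 ≤ Y ω) (hYint : Integrable Y P)
    {μ : ℝ} (hμ : μ = ∫ ω, Y ω ∂P) {c : ℝ} (hc : 0 < c)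
    (hsb : HasSizeBiasedDistribution P Y Ys) (hYs : ∀ᵐ ω ∂P, Ys ω ≤ Y ω + c)
    {t : ℝ} (ht : 0 < t) :
    P.real {ω | t ≤ Y ω - μ} ≤ exp (-t ^ 2 / (2 * c * μ + c * t)) := by
  have hμ0 : 0 ≤ μ := hμ ▸ integral_nonneg_of_ae hYnonneg
  set θ := 2 * t / (c * (2 * μ + t)) with hθ
  have hcθ : c * θ = 2 * t / (2 * μ + t) := by rw [hθ]; field_simp
  have hexp : μ * exp (c * θ) ≤ μ + t := hcθ ▸ mul_exp_two_mul_div_le_add hμ0 ht.le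
  calc P.real {ω | t ≤ Y ω - μ} = P.real {ω | μ + t ≤ Y ω} := by simp only [le_sub_iff_add_le']
    _ ≤ exp (-θ * (μ + t) + μ * (exp (c * θ) - 1) / c) :=
      hμ ▸ hsb.measureReal_ge_le_exp hYint hYnonneg hc hYs (by positivity) (μ + t)
    _ ≤ exp (-θ * (μ + t) + t / c) := by gcongr; linarith
    _ = exp (-t ^ 2 / (2 * c * μ + c * t)) := by rw [hθ]; congr 1; field_simp; ring

end

/-- Right tail bound from a bounded size bias coupling, assuming the moment
generating function of `Y` is finite at `2 / c`. -/
theorem right_tail_of_bounded_size_bias_coupling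
    {Ω : Type*} [MeasurableSpace Ω] (P : Measure Ω) [IsProbabilityMeasure P]
    (Y Ys : Ω → ℝ) (hYnonneg : ∀ᵐ ω ∂P, 0 ≤ Y ω) (hYint : Integrable Y P)
    (μ : ℝ) (hμ : μ = ∫ ω, Y ω ∂P) (hμne : μ ≠ 0)
    (c : ℝ) (hc : 0 < c)
    (hsb : HasSizeBiasedDistribution P Y Ys)
    (hbdd : ∀ᵐ ω ∂P, |Ys ω - Y ω| ≤ c)
    (hmgf : Integrable (fun ω => Real.exp ((2 / c) * Y ω)) P) :
    ∀ t : ℝ, 0 < t →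
      (P {ω | t ≤ Y ω - μ}).toReal ≤ Real.exp (-t ^ 2 / (2 * c * μ + c * t)) := fun _ ht =>
  right_tail_of_bounded_size_bias_coupling_general hYnonneg hYint hμ hc hsb
    (hbdd.mono fun _ h => by linarith [(abs_le.1 h).2]) ht
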